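/- Let m > 2 be a prime number and s = 2 (so p odd). Then P_m(0,2,h) = (q^{p−1} − q)/(2p) if m = p, and P_m(0,2,h) = (q^{m−1} − 1)/(2m) if m ≠ p. For a ≠ 0, P_m(a,2,h) = (q^{p−1} + S)/(2p) if m = p, and P_m(a,2,h) = (q^{m−1} + S − (−1)^h·ρ(m·a) − 1)/(2m) if m ≠ p, where S = (−1)^h·q^{(m−1)/2}·ρ((−1)^{(m−1)/2}·a) and m·a denotes (m mod p)·a in F_q. -/

import Mathlib

noncomputable section

open Complex Polynomial Classical

/-- `P_m(a,s,h)`: the number of monic irreducible `f = x^m − a x^{m-1} + ⋯ + (−1)^m b`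
of degree `m` over `F` with `b ∈ g^h·⟨g^s⟩`. -/
def PP (F : Type*) [Field F] [Fintype F] (g : F) (m s h : ℕ) (a : F) : ℕ :=
  Nat.card {f : Polynomial F // f.Monic ∧ f.natDegree = m ∧ Irreducible f ∧
    f.coeff (m - 1) = -a ∧ ∃ k : ℕ, (-1 : F) ^ m * f.coeff 0 = g ^ (h + s * k)}


theorem aux_gauss_sq {K : Type*} [Field K] [Fintype K] [DecidableEq K] (hK : ringChar K ≠ 2)
    (ψ : AddChar K ℂ) (hψ : ψ ≠ 1) :
    ∑ y : K, ψ (y ^ 2) = ∑ x : K, (quadraticChar K x : ℂ) * ψ x := by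
  have h1 : ∑ y : K, ψ (y ^ 2) = ∑ x : K, ((quadraticChar K x : ℂ) + 1) * ψ x := by
    rw [← Finset.sum_fiberwise (s := Finset.univ) (g := fun y : K => y ^ 2)]
    refine Finset.sum_congr rfl fun x _ => ?_
    rw [Finset.sum_congr rfl (g := fun _ => ψ x) (by
      intro y hy
      rw [(Finset.mem_filter.1 hy).2])]
    rw [Finset.sum_const, nsmul_eq_mul]
    congr 1
    have := quadraticChar_card_sqrts hK x
    have h2 : ({y : K | y ^ 2 = x}.toFinset) = Finset.univ.filter (fun y : K => y ^ 2 = x) := by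
      ext; simp
    rw [h2] at this
    exact_mod_cast congrArg (Int.cast : ℤ → ℂ) this
  rw [h1]
  have h0 : ∑ x : K, ψ x = 0 := AddChar.sum_eq_zero_of_ne_one hψ
  simp_rw [add_mul, one_mul, Finset.sum_add_distrib, h0, add_zero]

theorem aux_gauss_sq_mul {K : Type*} [Field K] [Fintype K] [DecidableEq K] (hK : ringChar K ≠ 2)
    (ψ : AddChar K ℂ) (hψ : ψ ≠ 1) (d : K) (hd : d ≠ 0) :
    ∑ y : K, ψ (d * y ^ 2) = (quadraticChar K d : ℂ) * ∑ x : K, (quadraticChar K x : ℂ) * ψ x := by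
  have hp : AddChar.mulShift ψ d ≠ 1 := AddChar.IsPrimitive.of_ne_one hψ hd
  have := aux_gauss_sq hK (AddChar.mulShift ψ d) hp
  simp only [AddChar.mulShift_apply] at this
  rw [this, Finset.mul_sum]
  refine Fintype.sum_equiv (Equiv.mulLeft₀ d hd) _ _ fun x => ?_
  simp only [Equiv.mulLeft₀_apply, map_mul, Int.cast_mul]
  have h2 : ((quadraticChar K d : ℤ) : ℂ) * (quadraticChar K d : ℤ) = 1 := by
    have := quadraticChar_sq_one hd
    rw [sq] at this
    exact_mod_cast congrArg (Int.cast : ℤ → ℂ) this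
  linear_combination (- (quadraticChar K x : ℂ) * ψ (d * x)) * h2

theorem aux_ringChar {F E : Type*} [Field F] [Field E] [Algebra F E] :
    ringChar E = ringChar F := (Algebra.ringChar_eq F E).symm

theorem aux_norm {F E : Type*} [Field F] [Fintype F] [DecidableEq F] [Field E] [Fintype E]
    [DecidableEq E] [Algebra F E] (hF : ringChar F ≠ 2) (x : E) :
    quadraticChar E x = quadraticChar F (Algebra.norm F x) := by
  have hE : ringChar E ≠ 2 := by rwa [aux_ringChar (F := F)]
  by_cases hx : x = 0
  · subst hx
    simp [Algebra.norm_zero]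
  have hN : Algebra.norm F x ≠ 0 := by simpa [Algebra.norm_eq_zero_iff] using hx
  have key : x ^ (Fintype.card E / 2) = algebraMap F E ((Algebra.norm F x) ^ (Fintype.card F / 2)) := by
    rw [map_pow, FiniteField.algebraMap_norm_eq_pow, ← pow_mul]
    congr 1
    have h1 := FiniteField.odd_card_of_char_ne_two hF
    have h2 := FiniteField.odd_card_of_char_ne_two hE
    have h3 : (Nat.card F - 1) ∣ (Nat.card E - 1) := by
      rw [Module.natCard_eq_pow_finrank (K := F) (V := E)]
      simpa using Nat.sub_dvd_pow_sub_pow (Nat.card F) 1 (Module.finrank F E)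
    rw [Nat.card_eq_fintype_card, Nat.card_eq_fintype_card] at h3 ⊢
    obtain ⟨c, hc⟩ := h3
    have h5 : 1 < Fintype.card F := Fintype.one_lt_card
    rw [hc, Nat.mul_div_cancel_left _ (by omega)]
    have h6 : Fintype.card F - 1 = 2 * (Fintype.card F / 2) := by omega
    have h7 : Fintype.card E - 1 = 2 * (Fintype.card E / 2) := by
      have : 1 < Fintype.card E := Fintype.one_lt_card
      omega
    rw [h6, h7] at hc
    nlinarith
  rw [quadraticChar_eq_pow_of_char_ne_two hE hx, quadraticChar_eq_pow_of_char_ne_two hF hN, key]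
  simp only [map_eq_one_iff _ (algebraMap F E).injective]

theorem aux_char_algebraMap {F E : Type*} [Field F] [Fintype F] [DecidableEq F] [Field E]
    [Fintype E] [DecidableEq E] [Algebra F E] (hF : ringChar F ≠ 2)
    (hodd : Odd (Module.finrank F E)) (x : F) :
    quadraticChar E (algebraMap F E x) = quadraticChar F x := by
  rw [aux_norm hF, Algebra.norm_algebraMap, map_pow]
  obtain ⟨k, hk⟩ := hodd
  by_cases hx : x = 0
  · subst hx
    simp [hk]
  · rw [hk, pow_succ, pow_mul, quadraticChar_sq_one hx, one_pow, one_mul]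

theorem aux_diag {F E : Type*} [Field F] [Fintype F] [DecidableEq F] [Field E] [Fintype E]
    [DecidableEq E] [Algebra F E] (hF : ringChar F ≠ 2) (hodd : Odd (Module.finrank F E)) :
    ∃ (v : Module.Basis (Fin (Module.finrank F E)) F E) (d : Fin (Module.finrank F E) → F),
      (∀ i, d i ≠ 0) ∧ (∀ c : Fin (Module.finrank F E) → F,
        Algebra.trace F E ((∑ i, c i • v i) ^ 2) = ∑ i, d i * c i ^ 2) ∧
      quadraticChar F (∏ i, d i) = 1 := by
  have h2 : (2 : F) ≠ 0 := Ring.two_ne_zero hF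
  have : Invertible (2 : F) := invertibleOfNonzero h2
  obtain ⟨v, hv⟩ := LinearMap.BilinForm.exists_orthogonal_basis (B := Algebra.traceForm F E)
    ⟨fun x y => by simp [Algebra.traceForm_apply, mul_comm]⟩
  have hnd := traceForm_nondegenerate F E
  have hd := LinearMap.BilinForm.iIsOrtho.not_isOrtho_basis_self_of_nondegenerate hv hnd
  have hd' : ∀ i, Algebra.trace F E (v i * v i) ≠ 0 := fun i => hd i
  have ho : ∀ i j, i ≠ j → Algebra.trace F E (v i * v j) = 0 := fun i j hij => hv hij
  refine ⟨v, fun i => Algebra.trace F E (v i * v i), hd', ?_, ?_⟩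
  · intro c
    rw [sq, Finset.sum_mul_sum, map_sum]
    refine Finset.sum_congr rfl fun i _ => ?_
    rw [map_sum, Finset.sum_eq_single i]
    · rw [smul_mul_smul_comm, map_smul, smul_eq_mul]; ring
    · intro j _ hji
      rw [smul_mul_smul_comm, map_smul, ho i j hji.symm, smul_zero]
    · simp
  · have hprod : ∏ i, Algebra.trace F E (v i * v i) ≠ 0 := Finset.prod_ne_zero_iff.2 fun i _ => hd' i
    rw [← aux_char_algebraMap (E := E) hF hodd]
    have hcard : Fintype.card (Fin (Module.finrank F E)) = Fintype.card (E ≃ₐ[F] E) := by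
      rw [Fintype.card_fin, ← Nat.card_eq_fintype_card, IsGalois.card_aut_eq_finrank]
    let e := Fintype.equivOfCardEq hcard
    let M : Matrix (Fin (Module.finrank F E)) (Fin (Module.finrank F E)) E :=
      Matrix.of fun i j => (e j) (v i)
    have hM : M * M.transpose = Matrix.diagonal
        (fun i => algebraMap F E (Algebra.trace F E (v i * v i))) := by
      ext i j
      rw [Matrix.mul_apply]
      have : ∑ k, M i k * M.transpose k j = algebraMap F E (Algebra.trace F E (v i * v j)) := by
        rw [trace_eq_sum_automorphisms, ← e.sum_comp]
        simp [M]
      rw [this]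
      by_cases hij : i = j
      · subst hij; simp
      · rw [ho i j hij, Matrix.diagonal_apply_ne _ hij, map_zero]
    have hdet := congrArg Matrix.det hM
    rw [Matrix.det_mul, Matrix.det_transpose, Matrix.det_diagonal, ← map_prod] at hdet
    rw [quadraticChar_one_iff_isSquare]
    · exact ⟨_, hdet.symm⟩
    · exact (_root_.map_ne_zero _).2 hprod

theorem aux_map_sum {K ι : Type*} [Field K] (ψ : AddChar K ℂ) (s : Finset ι) (f : ι → K) :
    ψ (∑ i ∈ s, f i) = ∏ i ∈ s, ψ (f i) := by
  induction s using Finset.induction_on with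
  | empty => simp
  | insert a s ha ih => rw [Finset.sum_insert ha, Finset.prod_insert ha, AddChar.map_add_eq_mul, ih]

def auxT (F E : Type*) [Field F] [Fintype F] [DecidableEq F] [Field E] [Fintype E]
    [DecidableEq E] [Algebra F E] (a : F) : ℤ :=
  ∑ x : E, if Algebra.trace F E x = a then quadraticChar E x else 0

theorem auxT_scale {F E : Type*} [Field F] [Fintype F] [DecidableEq F] [Field E] [Fintype E]
    [DecidableEq E] [Algebra F E] (hF : ringChar F ≠ 2) (hodd : Odd (Module.finrank F E))
    (c a : F) (hc : c ≠ 0) : auxT F E (c * a) = quadraticChar F c * auxT F E a := by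
  unfold auxT
  rw [Finset.mul_sum]
  symm
  have hc' : algebraMap F E c ≠ 0 := (_root_.map_ne_zero _).2 hc
  refine Fintype.sum_equiv (Equiv.mulLeft₀ _ hc') _ _ fun x => ?_
  have : Algebra.trace F E (algebraMap F E c * x) = c * Algebra.trace F E x := by
    rw [← Algebra.smul_def, map_smul, smul_eq_mul]
  simp only [Equiv.mulLeft₀_apply, this, mul_right_inj' hc, map_mul,
    aux_char_algebraMap hF hodd, mul_ite, mul_zero]

theorem auxT_zero {F E : Type*} [Field F] [Fintype F] [DecidableEq F] [Field E] [Fintype E]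
    [DecidableEq E] [Algebra F E] (hF : ringChar F ≠ 2) (hodd : Odd (Module.finrank F E)) :
    auxT F E 0 = 0 := by
  obtain ⟨c, hc⟩ := quadraticChar_exists_neg_one hF
  have hc0 : c ≠ 0 := by
    rintro rfl
    simp at hc
  have := auxT_scale (E := E) hF hodd c 0 hc0
  rw [mul_zero, hc] at this
  omega

theorem auxT_one {F E : Type*} [Field F] [Fintype F] [DecidableEq F] [Field E] [Fintype E]
    [DecidableEq E] [Algebra F E] (hF : ringChar F ≠ 2) (k : ℕ)
    (hk : Module.finrank F E = 2 * k + 1) :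
    auxT F E 1 = (quadraticChar F (-1) * Fintype.card F) ^ k := by
  have hodd : Odd (Module.finrank F E) := ⟨k, hk⟩
  have hE : ringChar E ≠ 2 := by rwa [aux_ringChar (F := F)]
  obtain ⟨ψ, hψ1⟩ := (AddChar.exists_apply_ne_zero (α := F) (a := 1)).2 one_ne_zero
  have hψ : ψ ≠ 1 := by
    rintro rfl
    exact hψ1 (by simp)
  set G : ℂ := ∑ x : F, (quadraticChar F x : ℂ) * ψ x with hG
  have hG2 : G ^ 2 = (quadraticChar F (-1) : ℂ) * Fintype.card F := by
    have h := gaussSum_sq (R := F) (R' := ℂ)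
      (χ := (quadraticChar F).ringHomComp (Int.castRingHom ℂ)) (ψ := ψ)
      ((MulChar.ringHomComp_ne_one_iff (RingHom.injective_int (Int.castRingHom ℂ))).2
        (quadraticChar_ne_one hF))
      ((quadraticChar_isQuadratic F).comp _) (AddChar.IsPrimitive.of_ne_one hψ)
    simpa [gaussSum, hG] using h
  have hG0 : G ≠ 0 := by
    intro h0
    rw [h0] at hG2
    have h1 : (quadraticChar F (-1) : ℤ) ≠ 0 := by
      rw [Ne, quadraticChar_eq_zero_iff]; simp
    have h3 : ((quadraticChar F (-1) : ℤ) : ℂ) ≠ 0 := by exact_mod_cast h1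
    have h4 : ((Fintype.card F : ℕ) : ℂ) ≠ 0 := by exact_mod_cast Fintype.card_ne_zero
    exact mul_ne_zero h3 h4 (by rw [← hG2]; simp)
  let Ψ : AddChar E ℂ := ψ.compAddMonoidHom (Algebra.trace F E).toAddMonoidHom
  have hΨa : ∀ x, Ψ x = ψ (Algebra.trace F E x) := fun x => rfl
  have hΨ : Ψ ≠ 1 := by
    intro h
    obtain ⟨x, hx⟩ := Algebra.trace_surjective F E 1
    apply hψ1
    rw [← hx, ← hΨa, h]
    simp
  have h1 := aux_gauss_sq hE Ψ hΨ
  have h2 : ∑ x : E, (quadraticChar E x : ℂ) * Ψ x = auxT F E 1 * G := by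
    have : ∀ a : F, ∑ x : E with Algebra.trace F E x = a, (quadraticChar E x : ℂ) * Ψ x =
        auxT F E a * ψ a := by
      intro a
      unfold auxT
      rw [← Finset.sum_filter, Int.cast_sum, Finset.sum_mul]
      refine Finset.sum_congr rfl fun x hx => ?_
      rw [hΨa, (Finset.mem_filter.1 hx).2]
    rw [← Finset.sum_fiberwise (s := Finset.univ) (g := fun x : E => Algebra.trace F E x)]
    simp_rw [this]
    rw [hG, Finset.mul_sum]
    refine Finset.sum_congr rfl fun a _ => ?_
    by_cases ha : a = 0
    · subst ha
      rw [auxT_zero hF hodd]; simp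
    · have := auxT_scale (E := E) hF hodd a 1 ha
      rw [mul_one] at this
      rw [this]; push_cast; ring
  obtain ⟨v, d, hd, htr, hρ⟩ := aux_diag (F := F) (E := E) hF hodd
  have h3 : ∑ y : E, Ψ (y ^ 2) = G ^ (Module.finrank F E) := by
    rw [← v.equivFun.symm.toEquiv.sum_comp]
    have : ∀ c : Fin (Module.finrank F E) → F, Ψ ((v.equivFun.symm.toEquiv c) ^ 2) =
        ∏ i, ψ (d i * c i ^ 2) := by
      intro c
      rw [hΨa]
      have : v.equivFun.symm.toEquiv c = ∑ i, c i • v i := by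
        simp [Module.Basis.equivFun_symm_apply]
      rw [this, htr, aux_map_sum]
    simp_rw [this]
    have h5 := Finset.prod_univ_sum (fun _ : Fin (Module.finrank F E) => (Finset.univ : Finset F))
      (fun i x => ψ (d i * x ^ 2))
    rw [Fintype.piFinset_univ] at h5
    rw [← h5]
    simp_rw [fun i => aux_gauss_sq_mul hF ψ hψ (d i) (hd i)]
    rw [Finset.prod_mul_distrib, Finset.prod_const, ← hG, Finset.card_univ, Fintype.card_fin,
      ← Int.cast_prod, ← map_prod, hρ]
    simp
  rw [h2, h3, hk, pow_succ] at h1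
  have h6 := mul_right_cancel₀ hG0 h1
  rw [pow_mul, hG2] at h6
  exact_mod_cast h6.symm

theorem aux_count {K : Type*} [Field K] [Fintype K] [DecidableEq K] (P : K → Prop)
    [DecidablePred P] (ε : ℤ) (hε : ε = 1 ∨ ε = -1) :
    2 * (((Finset.univ.filter (fun x : K => P x ∧ quadraticChar K x = ε)).card : ℕ) : ℤ) =
      ((Finset.univ.filter (fun x : K => P x ∧ x ≠ 0)).card : ℕ) +
        ε * ∑ x : K, if P x then quadraticChar K x else 0 := by
  rw [Finset.card_filter, Finset.card_filter, Finset.mul_sum]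
  push_cast
  rw [Finset.mul_sum, ← Finset.sum_add_distrib]
  refine Finset.sum_congr rfl fun x _ => ?_
  by_cases hx : x = 0
  · subst hx
    rcases hε with rfl | rfl <;> simp
  · rcases quadraticChar_dichotomy hx with h | h <;> rcases hε with rfl | rfl <;>
      by_cases hP : P x <;> simp [h, hx, hP]

theorem aux_gen {F : Type*} [Field F] [Fintype F] [DecidableEq F] (hF : ringChar F ≠ 2)
    (g : Fˣ) (hg : ∀ u : Fˣ, u ∈ Subgroup.zpowers g) (h : ℕ) (hh : h < 2) (b : F) :
    (∃ k : ℕ, b = (g : F) ^ (h + 2 * k)) ↔ quadraticChar F b = (-1) ^ h := by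
  have hpow : ∀ u : Fˣ, ∃ n : ℕ, g ^ n = u := fun u =>
    (mem_powers_iff_mem_zpowers.2 (hg u))
  have hρ : quadraticChar F (g : F) = -1 := by
    rcases quadraticChar_dichotomy (a := (g : F)) g.ne_zero with h1 | h1
    · obtain ⟨a, ha⟩ := quadraticChar_exists_neg_one' hF
      obtain ⟨n, rfl⟩ := hpow a
      rw [Units.val_pow_eq_pow_val, map_pow, h1, one_pow] at ha
      norm_num at ha
    · exact h1
  constructor
  · rintro ⟨k, rfl⟩
    rw [map_pow, hρ, pow_add, pow_mul]; simp
  · intro hb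
    have hb0 : b ≠ 0 := by
      rintro rfl
      rw [quadraticChar_zero] at hb
      exact pow_ne_zero h (by norm_num : (-1 : ℤ) ≠ 0) hb.symm
    obtain ⟨n, hn⟩ := hpow (Units.mk0 b hb0)
    have hn' : (g : F) ^ n = b := by
      have := congrArg Units.val hn
      simpa using this
    rw [← hn', map_pow, hρ] at hb
    have hpar : n % 2 = h := by
      rw [neg_one_pow_eq_pow_mod_two] at hb
      rcases Nat.mod_two_eq_zero_or_one n with h0 | h0 <;> rw [h0] at hb ⊢ <;>
        interval_cases h <;> simp at hb ⊢
    exact ⟨n / 2, by rw [← hn']; congr 1; omega⟩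

theorem aux_norm_trace {F E : Type*} [Field F] [Field E] [Algebra F E] [FiniteDimensional F E]
    (x : E) (hx : (minpoly F x).natDegree = Module.finrank F E) :
    Algebra.norm F x = (-1) ^ (Module.finrank F E) * (minpoly F x).coeff 0 ∧
      Algebra.trace F E x = -(minpoly F x).coeff (Module.finrank F E - 1) := by
  have hint : IsIntegral F x := .of_finite F x
  have htop := (Field.primitive_element_iff_minpoly_natDegree_eq F x).2 hx
  have htop' : Algebra.adjoin F {x} = ⊤ := by
    rw [← IntermediateField.adjoin_simple_toSubalgebra_of_isAlgebraic hint.isAlgebraic, htop]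
    rfl
  have h1 := Algebra.PowerBasis.norm_gen_eq_coeff_zero_minpoly (PowerBasis.ofAdjoinEqTop hint htop')
  have h2 := PowerBasis.trace_gen_eq_nextCoeff_minpoly (PowerBasis.ofAdjoinEqTop hint htop')
  rw [← PowerBasis.finrank] at h1
  rw [PowerBasis.ofAdjoinEqTop_gen] at h1 h2
  refine ⟨h1, ?_⟩
  rw [h2, nextCoeff_of_natDegree_pos (by rw [hx]; exact Module.finrank_pos), hx]

theorem aux_PP {F E : Type*} [Field F] [Fintype F] [DecidableEq F] [Field E] [Fintype E]
    [DecidableEq E] [Algebra F E] (hF : ringChar F ≠ 2) (m : ℕ) (hm : m.Prime)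
    (hmE : Module.finrank F E = m)
    (g : Fˣ) (hg : ∀ u : Fˣ, u ∈ Subgroup.zpowers g) (h : ℕ) (hh : h < 2) (a : F) :
    m * PP F (g : F) m 2 h a = (Finset.univ.filter (fun x : E => x ∉ (algebraMap F E).range ∧
      Algebra.trace F E x = a ∧ quadraticChar E x = (-1) ^ h)).card := by
  set S := Finset.univ.filter (fun x : E => x ∉ (algebraMap F E).range ∧
      Algebra.trace F E x = a ∧ quadraticChar E x = (-1) ^ h) with hS
  have hdeg : ∀ x : E, (minpoly F x).natDegree = m ↔ x ∉ (algebraMap F E).range := by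
    intro x
    rw [← minpoly.natDegree_eq_one_iff (A := F)]
    have h1 : (minpoly F x).natDegree ∣ m := hmE ▸ minpoly.degree_dvd (.of_finite F x)
    have := hm.one_lt
    rcases (Nat.dvd_prime hm).1 h1 with h2 | h2 <;> rw [h2] <;> omega
  have hmem : ∀ x : E, x ∈ S ↔ (minpoly F x).natDegree = m ∧
      (minpoly F x).coeff (m - 1) = -a ∧
        ∃ k : ℕ, (-1 : F) ^ m * (minpoly F x).coeff 0 = (g : F) ^ (h + 2 * k) := by
    intro x
    rw [hS, Finset.mem_filter, ← hdeg, aux_gen hF g hg h hh, aux_norm hF]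
    simp only [Finset.mem_univ, true_and]
    refine and_congr_right fun hx => ?_
    obtain ⟨h1, h2⟩ := aux_norm_trace x (hx.trans hmE.symm)
    rw [h1, h2, hmE, neg_eq_iff_eq_neg]
  have hroots : ∀ f : F[X], f.Monic → f.natDegree = m → Irreducible f →
      (Finset.univ.filter (fun x : E => minpoly F x = f)).card = m := by
    intro f hf hfm hirr
    have hsep : f.Separable := PerfectField.separable_of_irreducible hirr
    have hdvd := (hirr.natDegree_dvd_iff_dvd_X_pow_card_pow_sub_X (n := m)).1 (by rw [hfm])
    have hspl : (f.map (algebraMap F E)).Splits := by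
      have h1 := (FiniteField.isSplittingField_sub E F).splits
      have h2 : Fintype.card E = Nat.card F ^ m := by
        rw [← Nat.card_eq_fintype_card, Module.natCard_eq_pow_finrank (K := F), hmE]
      rw [h2] at h1
      refine Splits.of_dvd h1 ?_ (Polynomial.map_dvd (algebraMap F E) hdvd)
      exact Polynomial.map_ne_zero
        (FiniteField.X_pow_card_pow_sub_X_ne_zero _ hm.ne_zero Finite.one_lt_card)
    rw [← hfm, ← card_rootSet_eq_natDegree hsep hspl, Fintype.card_subtype]
    congr 1
    ext x
    simp only [Finset.mem_filter, Finset.mem_univ, true_and]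
    rw [mem_rootSet_of_ne hirr.ne_zero]
    constructor
    · rintro rfl
      exact minpoly.aeval F x
    · intro hx
      exact (minpoly.eq_of_irreducible_of_monic hirr hx hf).symm
  have hPP : PP F (g : F) m 2 h a = (S.image (minpoly F)).card := by
    unfold PP
    refine Nat.subtype_card _ fun f => ?_
    rw [Finset.mem_image]
    constructor
    · rintro ⟨x, hx, rfl⟩
      obtain ⟨h1, h2, h3⟩ := (hmem x).1 hx
      exact ⟨minpoly.monic (.of_finite F x), h1, minpoly.irreducible (.of_finite F x), h2, h3⟩
    · rintro ⟨h1, h2, h3, h4, h5⟩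
      have hc := hroots f h1 h2 h3
      have : 0 < (Finset.univ.filter (fun x : E => minpoly F x = f)).card := by
        rw [hc]; exact hm.pos
      obtain ⟨x, hx⟩ := Finset.card_pos.1 this
      have hx' := (Finset.mem_filter.1 hx).2
      refine ⟨x, (hmem x).2 ?_, hx'⟩
      rw [hx']
      exact ⟨h2, h4, h5⟩
  rw [hPP, Finset.card_eq_sum_card_image (minpoly F) S, Finset.sum_const_nat (m := m), mul_comm]
  intro f hf
  obtain ⟨x, hx, rfl⟩ := Finset.mem_image.1 hf
  have hx2 := (hmem x).1 hx
  rw [← hroots (minpoly F x) (minpoly.monic (.of_finite F x)) hx2.1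
    (minpoly.irreducible (.of_finite F x))]
  congr 1
  ext y
  simp only [Finset.mem_filter, Finset.mem_univ, true_and]
  refine ⟨fun hy => hy.2, fun hy => ⟨?_, hy⟩⟩
  rw [hmem, hy]
  exact hx2

theorem aux_trace_card {F E : Type*} [Field F] [Fintype F] [DecidableEq F] [Field E] [Fintype E]
    [DecidableEq E] [Algebra F E] (n : ℕ) (hn : Module.finrank F E = n + 1) (a : F) :
    (Finset.univ.filter (fun x : E => Algebra.trace F E x = a)).card = Fintype.card F ^ n := by
  have hsurj := Algebra.trace_surjective F E
  have heq : ∀ b : F, (Finset.univ.filter (fun x : E => Algebra.trace F E x = b)).card =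
      (Finset.univ.filter (fun x : E => Algebra.trace F E x = a)).card := fun b =>
    AddMonoidHom.card_fiber_eq_of_mem_range (Algebra.trace F E) (hsurj b) (hsurj a)
  have h1 := Finset.card_eq_sum_card_fiberwise (s := (Finset.univ : Finset E))
    (t := (Finset.univ : Finset F)) (f := fun x => Algebra.trace F E x) (fun x _ => by simp)
  rw [Finset.sum_congr rfl (fun b _ => heq b), Finset.sum_const, Finset.card_univ,
    Finset.card_univ, Module.card_eq_pow_finrank (K := F) (V := E), hn, pow_succ', smul_eq_mul] at h1
  exact (Nat.eq_of_mul_eq_mul_left Fintype.card_pos h1).symm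

theorem aux_trace_card' {F E : Type*} [Field F] [Fintype F] [DecidableEq F] [Field E] [Fintype E]
    [DecidableEq E] [Algebra F E] (n : ℕ) (hn : Module.finrank F E = n + 1) (a : F) :
    (((Finset.univ.filter (fun x : E => Algebra.trace F E x = a ∧ x ≠ 0)).card : ℕ) : ℤ) =
      (Fintype.card F : ℤ) ^ n - if a = 0 then 1 else 0 := by
  have h := aux_trace_card (E := E) n hn a
  rw [← Finset.card_filter_add_card_filter_not (fun x : E => x ≠ 0), Finset.filter_filter,
    Finset.filter_filter] at h
  have h2 : (Finset.univ.filter (fun x : E => Algebra.trace F E x = a ∧ ¬ x ≠ 0)).card =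
      if a = 0 then 1 else 0 := by
    split_ifs with ha
    · subst ha
      rw [Finset.card_eq_one]
      refine ⟨0, ?_⟩
      ext x
      simp only [Finset.mem_filter, Finset.mem_univ, true_and, Finset.mem_singleton, not_not]
      constructor
      · exact fun h => h.2
      · rintro rfl; simp
    · rw [Finset.card_eq_zero, Finset.filter_eq_empty_iff]
      rintro x - ⟨h1, h3⟩
      rw [not_not] at h3
      subst h3
      exact ha (by rw [← h1, map_zero])
  rw [h2] at h
  have h' := congrArg (Nat.cast : ℕ → ℤ) h
  push_cast at h'
  linarith

theorem aux_split {F E : Type*} [Field F] [Fintype F] [DecidableEq F] [Field E] [Fintype E]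
    [DecidableEq E] [Algebra F E] (hF : ringChar F ≠ 2) (m : ℕ) (hmo : Odd m)
    (hmE : Module.finrank F E = m) (ε : ℤ) (a : F) :
    (Finset.univ.filter (fun x : E => Algebra.trace F E x = a ∧ quadraticChar E x = ε)).card =
    (Finset.univ.filter (fun x : F => (m : F) * x = a ∧ quadraticChar F x = ε)).card +
    (Finset.univ.filter (fun x : E => x ∉ (algebraMap F E).range ∧
      Algebra.trace F E x = a ∧ quadraticChar E x = ε)).card := by
  rw [← Finset.card_filter_add_card_filter_not (fun x : E => x ∈ (algebraMap F E).range),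
    Finset.filter_filter, Finset.filter_filter]
  congr 1
  · symm
    apply Finset.card_bij (fun x _ => algebraMap F E x)
    · intro x hx
      simp only [Finset.mem_filter, Finset.mem_univ, true_and] at hx ⊢
      rw [Algebra.trace_algebraMap, aux_char_algebraMap hF (hmE ▸ hmo), hmE, nsmul_eq_mul]
      exact ⟨hx, x, rfl⟩
    · intro x _ y _ hxy
      exact (algebraMap F E).injective hxy
    · intro y hy
      simp only [Finset.mem_filter, Finset.mem_univ, true_and] at hy
      obtain ⟨hy, x, rfl⟩ := hy
      rw [Algebra.trace_algebraMap, aux_char_algebraMap hF (hmE ▸ hmo), hmE, nsmul_eq_mul] at hy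
      exact ⟨x, by simpa using hy, rfl⟩
  · congr 1
    ext x
    simp only [Finset.mem_filter, Finset.mem_univ, true_and]
    tauto

theorem aux_main {F E : Type*} [Field F] [Fintype F] [DecidableEq F] [Field E] [Fintype E]
    [DecidableEq E] [Algebra F E] (hF : ringChar F ≠ 2) (m k : ℕ) (hm : m.Prime)
    (hk : m = 2 * k + 1) (hmE : Module.finrank F E = m)
    (g : Fˣ) (hg : ∀ u : Fˣ, u ∈ Subgroup.zpowers g) (h : ℕ) (hh : h < 2) (a : F) :
    2 * ((m * PP F (g : F) m 2 h a : ℕ) : ℤ) =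
      (Fintype.card F : ℤ) ^ (m - 1) - (if a = 0 then 1 else 0) +
      (-1) ^ h * ((Fintype.card F : ℤ) ^ k * quadraticChar F ((-1) ^ k * a)) -
      (((Finset.univ.filter (fun x : F => (m : F) * x = a ∧ x ≠ 0)).card : ℕ) +
        (-1) ^ h * ∑ x : F, if (m : F) * x = a then quadraticChar F x else 0) := by
  have hodd : Odd m := ⟨k, hk⟩
  have hε : ((-1 : ℤ) ^ h = 1 ∨ (-1 : ℤ) ^ h = -1) := neg_one_pow_eq_or ℤ h
  have h1 := aux_split (E := E) hF m hodd hmE ((-1) ^ h) a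
  rw [← aux_PP hF m hm hmE g hg h hh a] at h1
  have h2 := aux_count (fun x : E => Algebra.trace F E x = a) _ hε
  have h3 := aux_count (fun x : F => (m : F) * x = a) _ hε
  rw [aux_trace_card' (m - 1) (by rw [hmE]; have := hm.pos; omega) a] at h2
  have hT : (∑ x : E, if Algebra.trace F E x = a then quadraticChar E x else 0) =
      (Fintype.card F : ℤ) ^ k * quadraticChar F ((-1) ^ k * a) := by
    change auxT F E a = _
    by_cases ha : a = 0
    · subst ha
      rw [auxT_zero hF (hmE ▸ hodd)]; simp
    · have h4 := auxT_scale (E := E) hF (hmE ▸ hodd) a 1 ha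
      rw [mul_one] at h4
      rw [h4, auxT_one hF k (hmE.trans hk), map_mul, map_pow]
      ring
  rw [hT] at h2
  have h1' := congrArg (Nat.cast : ℕ → ℤ) h1
  push_cast at h1' h2 h3 ⊢
  linarith

/-- The values of `P_m(a,2,h)` for a prime `m > 2` and `s = 2` (Carlitz's case), with
`S = (−1)^h·q^{(m−1)/2}·ρ((−1)^{(m−1)/2}·a)` and `ρ` the quadratic character of `F`. -/
theorem stmt10 (p r m h : ℕ) [Fact p.Prime] (hr : 0 < r) (hm : m.Prime) (hm2 : 2 < m)
    (F : Type*) [Field F] [Fintype F] [DecidableEq F]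
    (hF : Fintype.card F = p ^ r)
    (g : Fˣ) (hg : ∀ u : Fˣ, u ∈ Subgroup.zpowers g)
    (hsq : 2 ∣ Fintype.card F - 1) (hh : h < 2) (a : F) :
    (a = 0 → m = p →
      (PP F (g : F) m 2 h a : ℚ) =
        ((Fintype.card F : ℚ) ^ (p - 1) - (Fintype.card F : ℚ)) / (2 * p)) ∧
    (a = 0 → m ≠ p →
      (PP F (g : F) m 2 h a : ℚ) = ((Fintype.card F : ℚ) ^ (m - 1) - 1) / (2 * m)) ∧
    (a ≠ 0 → m = p →
      (PP F (g : F) m 2 h a : ℚ) =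
        ((Fintype.card F : ℚ) ^ (p - 1) +
          (-1 : ℚ) ^ h * (Fintype.card F : ℚ) ^ ((m - 1) / 2) *
            (quadraticChar F ((-1 : F) ^ ((m - 1) / 2) * a) : ℚ)) / (2 * p)) ∧
    (a ≠ 0 → m ≠ p →
      (PP F (g : F) m 2 h a : ℚ) =
        ((Fintype.card F : ℚ) ^ (m - 1) +
          (-1 : ℚ) ^ h * (Fintype.card F : ℚ) ^ ((m - 1) / 2) *
            (quadraticChar F ((-1 : F) ^ ((m - 1) / 2) * a) : ℚ) -
          (-1 : ℚ) ^ h * (quadraticChar F ((m : F) * a) : ℚ) - 1) / (2 * m)) := by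
  have hp : p.Prime := Fact.out
  have hcp : CharP F p := by
    have h1 : ringChar F ∣ p ^ r := by
      rw [← hF]
      exact (ringChar.spec F _).1 (Nat.cast_card_eq_zero F)
    have h2 : (ringChar F).Prime := CharP.char_is_prime F _
    have h3 := (Nat.prime_dvd_prime_iff_eq h2 hp).1 (h2.dvd_of_dvd_pow h1)
    exact ringChar.of_eq h3
  have hrc : ringChar F = p := ringChar.eq F p
  have hFchar : ringChar F ≠ 2 := by
    intro h2
    have h3 : Fintype.card F % 2 = 0 := FiniteField.even_card_of_char_two h2
    have h4 : 0 < Fintype.card F := Fintype.card_pos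
    omega
  obtain ⟨k, hk⟩ := hm.odd_of_ne_two (by omega)
  have hk2 : (m - 1) / 2 = k := by omega
  have : NeZero m := ⟨hm.ne_zero⟩
  let E := FiniteField.Extension F p m
  have : Fintype E := Fintype.ofFinite E
  have key := aux_main (E := E) hFchar m k hm hk (FiniteField.finrank_extension F p m) g hg h hh a
  have keyQ := congrArg (Int.cast : ℤ → ℚ) key
  have hmQ : (m : ℚ) ≠ 0 := by exact_mod_cast hm.ne_zero
  have hm0 : (m : F) = 0 ↔ m = p := by
    rw [CharP.cast_eq_zero_iff F p, Nat.prime_dvd_prime_iff_eq hp hm, eq_comm]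
  have hcard1 : (((Finset.univ.filter (fun x : F => x ≠ 0)).card : ℕ) : ℚ) = Fintype.card F - 1 := by
    rw [Finset.filter_ne' , Finset.card_erase_of_mem (Finset.mem_univ _), Finset.card_univ,
      Nat.cast_sub Fintype.card_pos]
    simp
  have hdivQ : ∀ {y : ℚ}, 2 * ((m : ℚ) * (PP F (g : F) m 2 h a : ℚ)) = y →
      (PP F (g : F) m 2 h a : ℚ) = y / (2 * m) := by
    intro y hy
    rw [← hy]; field_simp
  rw [hk2]
  refine ⟨?_, ?_, ?_, ?_⟩
  · intro ha hmp
    have hz := hm0.2 hmp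
    rw [← hmp]
    apply hdivQ
    subst ha
    simp only [hz, zero_mul, true_and, if_true, mul_zero, quadraticChar_sum_zero hFchar,
      quadraticChar_zero] at keyQ
    push_cast at keyQ
    rw [hcard1] at keyQ
    rw [keyQ]; ring
  · intro ha hmp
    have hz := mt hm0.1 hmp
    apply hdivQ
    subst ha
    simp [hz] at keyQ
    rw [keyQ]
  · intro ha hmp
    have hz := hm0.2 hmp
    rw [← hmp]
    apply hdivQ
    have ha' : ¬ (0 = a) := fun h => ha h.symm
    simp only [hz, zero_mul, ha, ha', false_and, if_false, Finset.filter_false,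
      Finset.card_empty, Finset.sum_const_zero] at keyQ
    push_cast at keyQ
    rw [keyQ]; ring
  · intro ha hmp
    have hz := mt hm0.1 hmp
    apply hdivQ
    have hx : ∀ x : F, (m : F) * x = a ↔ x = a / m := by
      intro x
      rw [eq_div_iff hz, mul_comm]
    have hne : a / (m : F) ≠ 0 := div_ne_zero ha hz
    have hcard : (Finset.univ.filter (fun x : F => x = a / (m : F) ∧ x ≠ 0)).card = 1 := by
      rw [Finset.card_eq_one]
      refine ⟨a / m, ?_⟩
      ext x
      simp only [Finset.mem_filter, Finset.mem_univ, true_and, Finset.mem_singleton]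
      exact ⟨fun h => h.1, fun h => ⟨h, h ▸ hne⟩⟩
    have hq : quadraticChar F (a / m) = quadraticChar F ((m : F) * a) := by
      have : (m : F) * a = (m : F) ^ 2 * (a / m) := by field_simp
      rw [this, map_mul, quadraticChar_sq_one' hz, one_mul]
    simp only [hx, hcard, ha, if_false, Finset.sum_ite_eq', Finset.mem_univ, if_true, hq] at keyQ
    push_cast at keyQ
    rw [keyQ]; ring

end
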